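/- Let m ≥ k ≥ 1 be integers and let H be a finite connected graph with cop number c(H) ≥ k and diameter at most 2. Then m − 1 zombies do not have a winning strategy on Z_{k,m}(H); that is, z(Z_{k,m}(H)) ≥ m. -/

import Mathlib

open SimpleGraph

/-! ### Pursuit games on graphs

A round of the game is recorded as a pair `(c, r)` where `c : Fin k → V` is the
configuration of the `k` pursuers (cops or zombies) and `r : V` the position of the
evader (robber or survivor).  In a round the pursuers move first (knowing the full
history), then the evader moves (knowing the full history and the pursuers' new
configuration).  Strategies are functions of the full history, so no generality is lost. -/

/-- The history of a play: the list of (pursuer configuration, evader position) pairs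
for the completed rounds so far. -/
abbrev GameHist (V : Type*) (k : ℕ) := List ((Fin k → V) × V)

/-- The history determined by the sequences `c` (pursuer configurations) and `r`
(evader positions), recording rounds `0, …, n-1`. -/
def histUpTo {V : Type*} {k : ℕ} (c : ℕ → Fin k → V) (r : ℕ → V) (n : ℕ) : GameHist V k :=
  (List.range n).map fun i => (c i, r i)

/-- The robber/survivor always moves along an edge or stays still. -/
def RobberLegal {V : Type*} (G : SimpleGraph V) (r : ℕ → V) : Prop :=
  ∀ n, r (n+1) = r n ∨ G.Adj (r n) (r (n+1))

/-- At step `n`, each cop stays still or moves along an edge. -/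
def CopStepLegal {V : Type*} (G : SimpleGraph V) {k : ℕ} (c : ℕ → Fin k → V) (n : ℕ) : Prop :=
  ∀ i, c (n+1) i = c n i ∨ G.Adj (c n i) (c (n+1) i)

/-- At step `n`, each zombie moves along an edge to a vertex strictly closer to the
survivor's current position `r n`. -/
def ZombieStepLegal {V : Type*} (G : SimpleGraph V) {k : ℕ} (c : ℕ → Fin k → V) (r : ℕ → V)
    (n : ℕ) : Prop :=
  ∀ i, G.Adj (c n i) (c (n+1) i) ∧ G.dist (c (n+1) i) (r n) < G.dist (c n i) (r n)

/-- The pursuers follow the history-dependent strategy `mv`: their configuration at time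
`n+1` is the strategy applied to the history of rounds `0, …, n`. -/
def FollowsStrat {V : Type*} {k : ℕ} (mv : GameHist V k → Fin k → V)
    (c : ℕ → Fin k → V) (r : ℕ → V) : Prop :=
  ∀ n, c (n+1) = mv (histUpTo c r (n+1))

/-- Starting from the cop configuration `cpos` (the robber then chooses any starting
vertex, and the cops move first), the cops have a strategy catching the robber: in every
play consistent with the strategy there is a time at which some cop and the robber occupy
the same vertex, all cop moves made up to and including the capturing move being legal. -/
def CopsCatchFrom {V : Type*} (G : SimpleGraph V) {k : ℕ} (cpos : Fin k → V) : Prop :=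
  ∃ mv : GameHist V k → Fin k → V,
    ∀ (c : ℕ → Fin k → V) (r : ℕ → V),
      c 0 = cpos → FollowsStrat mv c r → RobberLegal G r →
      ∃ n, ((∃ i, c n i = r n) ∧ ∀ m < n, CopStepLegal G c m) ∨
           ((∃ i, c (n+1) i = r n) ∧ ∀ m ≤ n, CopStepLegal G c m)

/-- `k` cops have a winning strategy on `G`. -/
def CopsWinWith {V : Type*} (G : SimpleGraph V) (k : ℕ) : Prop :=
  ∃ cpos : Fin k → V, CopsCatchFrom G cpos

/-- The cop number of `G`: the least `k` such that `k` cops have a winning strategy. -/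
noncomputable def copNumber {V : Type*} (G : SimpleGraph V) : ℕ :=
  sInf {k | CopsWinWith G k}

/-- Starting from the zombie configuration `zpos` and survivor position `spos`, with the
zombies to move, the zombies have a strategy catching the survivor: in every play
consistent with the strategy there is a time at which some zombie and the survivor occupy
the same vertex, all zombie moves made up to and including the capturing move being legal
(each zombie moves along an edge, strictly decreasing its distance to the survivor). -/
def ZombiesCatchFrom {V : Type*} (G : SimpleGraph V) {k : ℕ} (zpos : Fin k → V) (spos : V) :
    Prop :=
  ∃ mv : GameHist V k → Fin k → V,
    ∀ (c : ℕ → Fin k → V) (r : ℕ → V),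
      c 0 = zpos → r 0 = spos → FollowsStrat mv c r → RobberLegal G r →
      ∃ n, ((∃ i, c n i = r n) ∧ ∀ m < n, ZombieStepLegal G c r m) ∨
           ((∃ i, c (n+1) i = r n) ∧ ∀ m ≤ n, ZombieStepLegal G c r m)

/-- `k` zombies have a winning strategy on `G`: they can choose starting vertices so that
wherever the survivor starts, they catch the survivor. -/
def ZombiesWinWith {V : Type*} (G : SimpleGraph V) (k : ℕ) : Prop :=
  ∃ zpos : Fin k → V, ∀ spos : V, ZombiesCatchFrom G zpos spos

/-- The zombie number of `G`: the least `k` such that `k` zombies have a winning strategy. -/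
noncomputable def zombieNumber {V : Type*} (G : SimpleGraph V) : ℕ :=
  sInf {k | ZombiesWinWith G k}

/-- Starting from the zombie configuration `zpos` and survivor position `spos`, with the
zombies to move, the survivor has a strategy evading capture forever: in every play where
the survivor follows the strategy and the zombies move legally, the survivor's moves are
legal and no zombie ever occupies the survivor's vertex. -/
def SurvivorEvadesFrom {V : Type*} (G : SimpleGraph V) {k : ℕ} (zpos : Fin k → V) (spos : V) :
    Prop :=
  ∃ mv : GameHist V k → (Fin k → V) → V,
    ∀ (c : ℕ → Fin k → V) (r : ℕ → V),
      c 0 = zpos → r 0 = spos →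
      (∀ n, r (n+1) = mv (histUpTo c r (n+1)) (c (n+1))) →
      (∀ n, ZombieStepLegal G c r n) →
      RobberLegal G r ∧ ∀ n, (∀ i, c n i ≠ r n) ∧ (∀ i, c (n+1) i ≠ r n)

/-- Zombie-move legality in the variant where in each round the survivor moves first:
at step `n` each zombie moves along an edge, strictly decreasing its distance to the
survivor's current position `r (n+1)`. -/
def ZombieStepLegalAfter {V : Type*} (G : SimpleGraph V) {k : ℕ} (c : ℕ → Fin k → V)
    (r : ℕ → V) (n : ℕ) : Prop :=
  ∀ i, G.Adj (c n i) (c (n+1) i) ∧ G.dist (c (n+1) i) (r (n+1)) < G.dist (c n i) (r (n+1))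

/-- Starting from the zombie configuration `zpos` and survivor position `spos`, with the
survivor to move (the zombies then responding each round), the zombies have a strategy
catching the survivor. -/
def ZombiesCatchFromSurvivorToMove {V : Type*} (G : SimpleGraph V) {k : ℕ}
    (zpos : Fin k → V) (spos : V) : Prop :=
  ∃ mv : GameHist V k → V → Fin k → V,
    ∀ (c : ℕ → Fin k → V) (r : ℕ → V),
      c 0 = zpos → r 0 = spos →
      (∀ n, c (n+1) = mv (histUpTo c r (n+1)) (r (n+1))) →
      RobberLegal G r →
      ∃ n, (∃ i, c 0 i = r 0) ∨
           ((∃ i, c n i = r (n+1)) ∧ ∀ m < n, ZombieStepLegalAfter G c r m) ∨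
           ((∃ i, c (n+1) i = r (n+1)) ∧ ∀ m ≤ n, ZombieStepLegalAfter G c r m)

/-! ### The graphs `T_x`, the arm graphs `A_n`, and attaching an arm to a graph -/

/-- `|i - j| = 1 or 4` for `i j : Fin 5`, i.e. `i` and `j` are cyclically consecutive. -/
def fin5adj (i j : Fin 5) : Prop :=
  ((i : ℕ) + 1) % 5 = (j : ℕ) ∨ ((j : ℕ) + 1) % 5 = (i : ℕ)

/-- The vertices of the arm graph `A_n`: the vertex `b₂⁻¹` (`start`), the vertex `b₀ⁿ`
(`finish`), and for each copy `T_x` (`x : Fin n`) the inside vertices `a_i^x`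
(`inner x i`), the outside vertices `b_i^x` (`outer x i`) and the center `c^x`
(`center x`). -/
inductive ArmVert (n : ℕ) : Type
  | start : ArmVert n
  | finish : ArmVert n
  | inner : Fin n → Fin 5 → ArmVert n
  | outer : Fin n → Fin 5 → ArmVert n
  | center : Fin n → ArmVert n
  deriving DecidableEq

/-- One direction of the edge relation of the arm graph `A_n`. -/
def armRel (n : ℕ) : ArmVert n → ArmVert n → Prop
  | .inner x i, .inner y j => x = y ∧ fin5adj i j
  | .outer x i, .outer y j => (x = y ∧ fin5adj i j) ∨ ((x : ℕ) + 1 = (y : ℕ) ∧ (i : ℕ) = 2 ∧ (j : ℕ) = 0)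
  | .inner x i, .outer y j => x = y ∧ (i = j ∨ fin5adj i j)
  | .inner x _, .center y => x = y
  | .start, .outer y j => (y : ℕ) = 0 ∧ (j : ℕ) = 0
  | .outer x i, .finish => (x : ℕ) + 1 = n ∧ (i : ℕ) = 2
  | .start, .finish => n = 0
  | _, _ => False

/-- The arm graph `A_n`. -/
def armGraph (n : ℕ) : SimpleGraph (ArmVert n) := SimpleGraph.fromRel (armRel n)

/-- The index of the copy `T_x` containing a vertex of `A_n` (if any). -/
def copyIdx {n : ℕ} : ArmVert n → Option (Fin n)
  | .inner x _ => some x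
  | .outer x _ => some x
  | .center x => some x
  | _ => none

/-- The vertex `b₀ˣ` of `A_n` (for `x = n` this is the final vertex `b₀ⁿ`). -/
def b0 (n x : ℕ) : ArmVert n :=
  if h : x < n then ArmVert.outer ⟨x, h⟩ 0 else ArmVert.finish

/-- The vertex `b₂^{x-1}` of `A_n` (for `x = 0` this is the vertex `b₂⁻¹`). -/
def b2prev (n x : ℕ) : ArmVert n :=
  if h : 1 ≤ x ∧ x - 1 < n then ArmVert.outer ⟨x - 1, h.2⟩ 2 else ArmVert.start

/-- The vertex lies in the copy `T_x`. -/
def InCopy {W : Type*} {n : ℕ} (x : ℕ) (u : W ⊕ ArmVert n) : Prop :=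
  ∃ (a : ArmVert n) (y : Fin n), u = Sum.inr a ∧ copyIdx a = some y ∧ (y : ℕ) = x

/-- One direction of the edge relation of the graph obtained from a graph `H` and the
arm `A_n` by adding an edge from the vertex `b₂⁻¹` of `A_n` to the vertex `v` of `H`. -/
def combRel {W : Type*} (H : SimpleGraph W) (v : W) (n : ℕ) :
    (W ⊕ ArmVert n) → (W ⊕ ArmVert n) → Prop
  | Sum.inl w, Sum.inl w' => H.Adj w w'
  | Sum.inr a, Sum.inr a' => (armGraph n).Adj a a'
  | Sum.inl w, Sum.inr a => w = v ∧ a = ArmVert.start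
  | _, _ => False

/-- The graph obtained from `H` and the arm `A_n` by adding an edge from the vertex
`b₂⁻¹` of `A_n` to the vertex `v` of `H`. -/
def combGraph {W : Type*} (H : SimpleGraph W) (v : W) (n : ℕ) :
    SimpleGraph (W ⊕ ArmVert n) :=
  SimpleGraph.fromRel (combRel H v n)

/-! ### The graphs `Z_{k,m}(H)` -/

/-- The vertices of `Z_{k,m}(H)` where `H` has vertex type `W` and `p = 4*(m-k)`:
the vertices of `H`, for each vertex of `H` a path on `p` vertices, and for each
vertex of `H` `m` copies of the arm graph `A_p`. -/
abbrev ZVert (W : Type*) (m p : ℕ) : Type _ := W ⊕ (W × Fin p) ⊕ (W × Fin m × ArmVert p)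

/-- One direction of the edge relation of `Z_{k,m}(H)`. -/
def zRel {W : Type*} (H : SimpleGraph W) (m p : ℕ) : ZVert W m p → ZVert W m p → Prop
  | Sum.inl w, Sum.inl w' => H.Adj w w'
  | Sum.inl w, Sum.inr (Sum.inl (w', j)) => w = w' ∧ (j : ℕ) = 0
  | Sum.inr (Sum.inl (w, j)), Sum.inr (Sum.inl (w', j')) => w = w' ∧ (j : ℕ) + 1 = (j' : ℕ)
  | Sum.inl w, Sum.inr (Sum.inr (w', _, a)) => w = w' ∧ a = ArmVert.start
  | Sum.inr (Sum.inr (w, i, a)), Sum.inr (Sum.inr (w', i', a')) =>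
      w = w' ∧ i = i' ∧ (armGraph p).Adj a a'
  | _, _ => False

/-- The graph `Z_{k,m}(H)`: to each vertex `v` of `H` we attach (by an edge from `v` to
the first path vertex, resp. to `b₂⁻¹`) one path on `4*(m-k)` vertices and `m` copies of
the arm graph `A_{4*(m-k)}`. -/
def ZGraph {W : Type*} (H : SimpleGraph W) (k m : ℕ) :
    SimpleGraph (ZVert W m (4 * (m - k))) :=
  SimpleGraph.fromRel (zRel H m (4 * (m - k)))

/-! ### Hypercubes and block intersection graphs -/

/-- The `n`-dimensional hypercube: vertices are `Fin n → Bool`, two vertices being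
adjacent exactly when they differ in exactly one coordinate. -/
def hypercube (n : ℕ) : SimpleGraph (Fin n → Bool) :=
  SimpleGraph.fromRel fun x y => ∃ i, x i ≠ y i ∧ ∀ j, j ≠ i → x j = y j

/-- `(P, B)` is a balanced incomplete block design with parameters `(v, k, 1)`:
`P` has `v` points, every block has `k` points, and every pair of distinct points lies
in exactly one block. -/
def IsBIBD (P : Type*) (B : Finset (Finset P)) (v k : ℕ) : Prop :=
  Nat.card P = v ∧ (∀ b ∈ B, b.card = k) ∧
    ∀ p q : P, p ≠ q → ∃! b : Finset P, b ∈ B ∧ p ∈ b ∧ q ∈ b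

/-- The block intersection graph of a collection `B` of blocks: vertices are the blocks,
two distinct blocks being adjacent exactly when they intersect. -/
def blockGraph {P : Type*} (B : Finset (Finset P)) : SimpleGraph {b // b ∈ B} :=
  SimpleGraph.fromRel fun b b' => ∃ p, p ∈ b.val ∧ p ∈ b'.val

/-! ### Zombie-good positions on a graph with an attached arm -/

/-- A position (with the zombies to move) in the game on the graph obtained by attaching
the arm `A_n` to `H` at `v` is `x`-zombie-good if: the survivor is in some `T_y` with
`y ≥ x` or at `b₀ⁿ`; for some `i ≥ 1` the zombies `z_1, …, z_i` are all at `b₀ˣ`; the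
remaining zombies are in `H ∪ {b₂⁻¹} ∪ T_0 ∪ ⋯ ∪ T_{x-1}`; consecutive zombie distances
to the survivor satisfy `0 ≤ d_{j+1} - d_j ≤ 4`; and `d_m - d_1 ≥ n - x`. -/
def ZombieGood {W : Type*} (H : SimpleGraph W) (v : W) (n m x : ℕ)
    (zpos : Fin m → (W ⊕ ArmVert n)) (spos : W ⊕ ArmVert n) : Prop :=
  (∃ a : ArmVert n, spos = Sum.inr a ∧
      ((∃ y : Fin n, copyIdx a = some y ∧ x ≤ (y : ℕ)) ∨ a = ArmVert.finish)) ∧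
  (∃ i : ℕ, 1 ≤ i ∧ i ≤ m ∧
      (∀ j : Fin m, (j : ℕ) < i → zpos j = Sum.inr (b0 n x)) ∧
      (∀ j : Fin m, i ≤ (j : ℕ) →
        (∃ w, zpos j = Sum.inl w) ∨ zpos j = Sum.inr ArmVert.start ∨
          (∃ (a : ArmVert n) (y : Fin n), zpos j = Sum.inr a ∧ copyIdx a = some y ∧ (y : ℕ) < x))) ∧
  (∀ j : Fin m, ∀ h : (j : ℕ) + 1 < m,
      (combGraph H v n).dist spos (zpos j) ≤ (combGraph H v n).dist spos (zpos ⟨(j : ℕ) + 1, h⟩) ∧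
      (combGraph H v n).dist spos (zpos ⟨(j : ℕ) + 1, h⟩) - (combGraph H v n).dist spos (zpos j) ≤ 4) ∧
  (∀ hm : 1 ≤ m,
      n - x ≤ (combGraph H v n).dist spos (zpos ⟨m - 1, by omega⟩) -
        (combGraph H v n).dist spos (zpos ⟨0, by omega⟩))

/-! The survivor first plays on `H` against the roots of the `k - 1` zombies that are least deep in
pendant pieces, using the robber's strategy against `k - 1` cops.  If another zombie is about to
reach `H`, then `k` zombies are close to the survivor because `H` has diameter at most `2`, and the
survivor flees into an arm containing no zombie.  There it circles the outer 5-cycle of a copy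
`T_x`, and the zombies inside `T_x` can only follow it around.  It advances to `T_{x+1}` when some
zombie is about to enter `T_x` and its lag behind those already there is between `1` and `4`.
Each advance shortens every positive lag by `1`, so each of the at most `m - 1 - k` zombies that
were far away pays for at most `4` copies.
-/

/-! ### The zombie game -/

section ZombieGame

variable {V κ : Type*} {G : SimpleGraph V}

/-- The zombies may move from the positions `z` to the positions `z'` while the survivor is at
`s`.  The zombies are indexed by an arbitrary type. -/
def ZombieMove (G : SimpleGraph V) (z z' : κ → V) (s : V) : Prop :=
  ∀ i, G.Adj (z i) (z' i) ∧ G.dist (z' i) s < G.dist (z i) s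

/-- With zombies at `z` about to move, the survivor at `s` can forever end every turn at distance
at least `2` from all zombies.  This is the greatest fixed point of the one-round condition,
so it is established by exhibiting an invariant `S`. -/
def Evades (G : SimpleGraph V) (z : κ → V) (s : V) : Prop :=
  ∃ S : (κ → V) → V → Prop, S z s ∧ ∀ z s, S z s →
    (∀ i, 2 ≤ G.dist (z i) s) ∧
      ∀ z', ZombieMove G z z' s → ∃ s', (s' = s ∨ G.Adj s s') ∧ S z' s'

theorem Evades.two_le_dist {z : κ → V} {s : V} (h : Evades G z s) (i : κ) :
    2 ≤ G.dist (z i) s := by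
  obtain ⟨S, hzs, hS⟩ := h
  exact (hS z s hzs).1 i

theorem Evades.exists_response {z z' : κ → V} {s : V} (h : Evades G z s)
    (hz : ZombieMove G z z' s) : ∃ s', (s' = s ∨ G.Adj s s') ∧ Evades G z' s' := by
  obtain ⟨S, hzs, hS⟩ := h
  obtain ⟨s', hs', hz's'⟩ := (hS z s hzs).2 z' hz
  exact ⟨s', hs', S, hz's', hS⟩

theorem evades_of_invariant {S : (κ → V) → V → Prop}
    (hS : ∀ z s, S z s → (∀ i, 2 ≤ G.dist (z i) s) ∧
      ∀ z', ZombieMove G z z' s → ∃ s', (s' = s ∨ G.Adj s s') ∧ (S z' s' ∨ Evades G z' s'))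
    {z : κ → V} {s : V} (h : S z s) : Evades G z s := by
  refine ⟨fun z s ↦ S z s ∨ Evades G z s, .inl h, ?_⟩
  rintro z s (h | h)
  · exact hS z s h
  · exact ⟨h.two_le_dist, fun z' hz ↦
      let ⟨s', hs', h'⟩ := h.exists_response hz
      ⟨s', hs', .inr h'⟩⟩

theorem Evades.of_step {z : κ → V} {s : V} (hd : ∀ i, 2 ≤ G.dist (z i) s)
    (h : ∀ z', ZombieMove G z z' s → ∃ s', (s' = s ∨ G.Adj s s') ∧ Evades G z' s') :
    Evades G z s := by
  refine evades_of_invariant (S := fun y t ↦ y = z ∧ t = s) ?_ ⟨rfl, rfl⟩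
  rintro _ _ ⟨rfl, rfl⟩
  exact ⟨hd, fun z' hz ↦
    let ⟨s', hs', h'⟩ := h z' hz
    ⟨s', hs', .inr h'⟩⟩

theorem exists_play {k : ℕ} (mv : GameHist V k → Fin k → V)
    (response : (Fin k → V) → V → (Fin k → V) → V) (z : Fin k → V) (s : V) :
    ∃ c r, c 0 = z ∧ r 0 = s ∧ FollowsStrat mv c r ∧
      ∀ n, r (n + 1) = response (c n) (r n) (c (n + 1)) := by
  let next (p : GameHist V k × (Fin k → V) × V) : GameHist V k × (Fin k → V) × V :=
    let h := p.1 ++ [p.2]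
    (h, mv h, response p.2.1 p.2.2 (mv h))
  let play (n : ℕ) := next^[n] ([], z, s)
  have play_succ (n : ℕ) : play (n + 1) = next (play n) := Function.iterate_succ_apply' ..
  refine ⟨fun n ↦ (play n).2.1, fun n ↦ (play n).2.2, rfl, rfl, ?_, ?_⟩
  · have hist (n : ℕ) :
        (play n).1 = histUpTo (fun n ↦ (play n).2.1) (fun n ↦ (play n).2.2) n := by
      induction n with
      | zero => rfl
      | succ n ih =>
        rw [histUpTo, List.range_succ, List.map_append, ← histUpTo, ← ih, play_succ]
        rfl
    intro n
    rw [← hist]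
    simp only [play_succ, next]
  · intro n
    simp only [play_succ, next]

theorem Evades.not_zombiesCatchFrom {k : ℕ} {z : Fin k → V} {s : V} (h : Evades G z s) :
    ¬ ZombiesCatchFrom G z s := by
  rintro ⟨mv, hmv⟩
  have exists_legal (z : Fin k → V) (s : V) (z' : Fin k → V) : ∃ s', (s' = s ∨ G.Adj s s') ∧
      (Evades G z s → ZombieMove G z z' s → Evades G z' s') := by
    by_cases h : Evades G z s ∧ ZombieMove G z z' s
    · obtain ⟨s', hs', h'⟩ := h.1.exists_response h.2
      exact ⟨s', hs', fun _ _ ↦ h'⟩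
    · exact ⟨s, .inl rfl, fun h₁ h₂ ↦ (h ⟨h₁, h₂⟩).elim⟩
  choose response response_legal response_evades using exists_legal
  obtain ⟨c, r, rfl, rfl, hc, hr⟩ := exists_play mv response z s
  have evades (n : ℕ) (hlegal : ∀ m < n, ZombieStepLegal G c r m) : Evades G (c n) (r n) := by
    induction n with
    | zero => exact h
    | succ n ih =>
      rw [hr]
      exact response_evades _ _ _ (ih fun m hm ↦ hlegal m (by lia)) (hlegal n n.lt_succ_self)
  obtain ⟨n, ⟨⟨i, hi⟩, hlegal⟩ | ⟨⟨i, hi⟩, hlegal⟩⟩ :=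
    hmv c r rfl rfl hc fun n ↦ hr n ▸ response_legal ..
  · have := (evades n hlegal).two_le_dist i
    simp [hi] at this
  · have hdist := (evades n fun m hm ↦ hlegal m hm.le).two_le_dist i
    have hadj := (hlegal n le_rfl i).1
    rw [hi] at hadj
    rw [dist_eq_one_iff_adj.2 hadj] at hdist
    lia

theorem exists_zombiesWinWith [Finite V] (G : SimpleGraph V) : ∃ k, ZombiesWinWith G k := by
  obtain ⟨k, ⟨e⟩⟩ := Finite.exists_equiv_fin V
  exact ⟨k, e.symm, fun s ↦ ⟨fun _ ↦ e.symm, fun c r hc _ _ _ ↦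
    ⟨0, .inl ⟨⟨e (r 0), by simp [hc]⟩, by simp⟩⟩⟩⟩

theorem le_zombieNumber [Finite V] {m : ℕ} (h : ∀ j < m, ¬ ZombiesWinWith G j) :
    m ≤ zombieNumber G :=
  le_csInf (exists_zombiesWinWith G) fun j hj ↦ not_lt.1 fun hlt ↦ h j hlt hj

end ZombieGame

/-! ### The cop game -/

section CopGame

variable {V : Type*} {G : SimpleGraph V} {k : ℕ}

theorem histUpTo_succ (c : ℕ → Fin k → V) (r : ℕ → V) (n : ℕ) :
    histUpTo c r (n + 1) =
      (c 0, r 0) :: histUpTo (fun n ↦ c (n + 1)) (fun n ↦ r (n + 1)) n := by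
  simp only [histUpTo, List.range_succ_eq_map, List.map_cons, List.map_map]
  rfl

/-- The play with cop positions `c` and robber positions `r` ends with a capture, all cop moves
up to then being legal. -/
def CopsCapture (G : SimpleGraph V) (c : ℕ → Fin k → V) (r : ℕ → V) : Prop :=
  ∃ n, ((∃ i, c n i = r n) ∧ ∀ m < n, CopStepLegal G c m) ∨
    ((∃ i, c (n + 1) i = r n) ∧ ∀ m ≤ n, CopStepLegal G c m)

theorem CopsCapture.of_tail {c : ℕ → Fin k → V} {r : ℕ → V} (h₀ : CopStepLegal G c 0)
    (h : CopsCapture G (fun n ↦ c (n + 1)) (fun n ↦ r (n + 1))) : CopsCapture G c r := by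
  obtain ⟨n, ⟨hi, hlegal⟩ | ⟨hi, hlegal⟩⟩ := h
  · exact ⟨n + 1, .inl ⟨hi, fun
      | 0, _ => h₀
      | m + 1, hm => hlegal m (Nat.lt_of_succ_lt_succ hm)⟩⟩
  · exact ⟨n + 1, .inr ⟨hi, fun
      | 0, _ => h₀
      | m + 1, hm => hlegal m (Nat.le_of_succ_le_succ hm)⟩⟩

/-- With the robber at `r₀` and the cops at `c₀` about to move, the cops can catch the robber. -/
def CopsCatchRobberFrom (G : SimpleGraph V) (c₀ : Fin k → V) (r₀ : V) : Prop :=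
  ∃ mv : GameHist V k → Fin k → V, ∀ c r, c 0 = c₀ → r 0 = r₀ →
    FollowsStrat mv c r → RobberLegal G r → CopsCapture G c r

theorem copsCatchRobberFrom_of_move_eq {c c' : Fin k → V} {r : V}
    (hmove : ∀ i, c' i = c i ∨ G.Adj (c i) (c' i)) {i : Fin k} (hi : c' i = r) :
    CopsCatchRobberFrom G c r := by
  refine ⟨fun _ ↦ c', ?_⟩
  rintro c _ rfl rfl hc -
  refine ⟨0, .inr ⟨⟨i, (congrFun (hc 0) i).trans hi⟩, fun m hm ↦ ?_⟩⟩
  obtain rfl := Nat.le_zero.1 hm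
  simpa only [CopStepLegal, hc 0] using hmove

theorem copsCatchRobberFrom_of_move {c c' : Fin k → V} {r : V}
    (hmove : ∀ i, c' i = c i ∨ G.Adj (c i) (c' i))
    (h : ∀ r', (r' = r ∨ G.Adj r r') → CopsCatchRobberFrom G c' r') :
    CopsCatchRobberFrom G c r := by
  choose! mv hmv using h
  refine ⟨fun
    | _ :: (x, r') :: hist => mv r' ((x, r') :: hist)
    | _ => c', ?_⟩
  rintro c ρ rfl rfl hc hρ
  have hc₁ : c 1 = c' := hc 0
  refine .of_tail (by simpa only [CopStepLegal, hc₁] using hmove) ?_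
  refine hmv (ρ 1) (hρ 0) _ _ hc₁ rfl (fun n ↦ ?_) fun n ↦ hρ (n + 1)
  have hc_next := hc (n + 1)
  rw [histUpTo_succ, histUpTo_succ] at hc_next
  rwa [histUpTo_succ]

theorem copsCatchFrom_of_forall_copsCatchRobberFrom {c₀ : Fin k → V}
    (h : ∀ r, CopsCatchRobberFrom G c₀ r) : CopsCatchFrom G c₀ := by
  choose mv hmv using h
  refine ⟨fun
    | [] => c₀
    | (x, r) :: hist => mv r ((x, r) :: hist), fun c r hc₀ hc hr ↦ ?_⟩
  refine hmv (r 0) c r hc₀ rfl (fun n ↦ ?_) hr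
  have hc_next := hc n
  rw [histUpTo_succ] at hc_next
  rwa [histUpTo_succ]

/-- With the robber at `r` and the cops at `c` about to move, the cops cannot force a capture. -/
def RobberSafe (G : SimpleGraph V) (c : Fin k → V) (r : V) : Prop :=
  ¬ CopsCatchRobberFrom G c r

theorem exists_robberSafe (h : ¬ CopsWinWith G k) (c : Fin k → V) : ∃ r, RobberSafe G c r := by
  contrapose! h
  exact ⟨c, copsCatchFrom_of_forall_copsCatchRobberFrom fun r ↦ not_not.1 (h r)⟩

theorem RobberSafe.exists_response {c c' : Fin k → V} {r : V} (h : RobberSafe G c r)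
    (hmove : ∀ i, c' i = c i ∨ G.Adj (c i) (c' i)) :
    ∃ r', (r' = r ∨ G.Adj r r') ∧ RobberSafe G c' r' := by
  contrapose! h
  exact not_not.2 (copsCatchRobberFrom_of_move hmove fun r' hr' ↦ not_not.1 (h r' hr'))

theorem RobberSafe.not_eq_or_adj {c : Fin k → V} {r : V} (h : RobberSafe G c r) (i : Fin k) :
    ¬ (r = c i ∨ G.Adj (c i) r) := fun hr ↦
  h <| copsCatchRobberFrom_of_move_eq (c' := Function.update c i r) (i := i)
    (fun t ↦ by
      obtain rfl | ht := eq_or_ne t i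
      · simpa using hr
      · simp [ht])
    (Function.update_self ..)

end CopGame

/-! ### Distances through a cut vertex -/

section CutVertex

variable {V : Type*} {G : SimpleGraph V}

/-- Every edge leaving the set `B` ends at the vertex `q`. -/
def ExitsOnlyThrough (G : SimpleGraph V) (B : Set V) (q : V) : Prop :=
  ∀ ⦃u w⦄, u ∈ B → G.Adj u w → w ∈ B ∨ w = q

theorem dist_le_succ_of_adj (hG : G.Connected) {u w : V} (h : G.Adj u w) (s : V) :
    G.dist u s ≤ G.dist w s + 1 := by
  have := hG.dist_triangle (u := u) (v := w) (w := s)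
  rwa [dist_eq_one_iff_adj.2 h, add_comm] at this

theorem dist_map_le {W : Type*} {H : SimpleGraph W} (hH : H.Connected)
    (f : H →g G) (w w' : W) : G.dist (f w) (f w') ≤ H.dist w w' := by
  obtain ⟨p, hp⟩ := hH.exists_walk_length_eq_dist w w'
  rw [← hp, ← p.length_map f]
  exact dist_le _

theorem ExitsOnlyThrough.dist_eq_add {B : Set V} {q : V} (hB : ExitsOnlyThrough G B q)
    (hG : G.Connected) {u s : V} (hu : u ∈ B ∨ u = q) (hs : s ∉ B) :
    G.dist u s = G.dist u q + G.dist q s := by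
  refine le_antisymm hG.dist_triangle ?_
  obtain ⟨p, hp⟩ := hG.exists_walk_length_eq_dist u s
  rw [← hp]
  clear hp
  induction p with
  | nil =>
    obtain hu | rfl := hu
    · exact absurd hu hs
    · simp
  | @cons a b c hab p ih =>
    obtain ha | rfl := hu
    · have h_tail := ih (hB ha hab) hs
      have h_head := dist_le_succ_of_adj hG hab q
      rw [Walk.length_cons]
      lia
    · simpa using dist_le (p.cons hab)

theorem ExitsOnlyThrough.move {B : Set V} {q : V} (hB : ExitsOnlyThrough G B q)
    (hG : G.Connected) {u u' s : V} (hu : u ∈ B) (hs : s ∉ B) (hadj : G.Adj u u')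
    (hlt : G.dist u' s < G.dist u s) :
    (u' ∈ B ∨ u' = q) ∧ G.dist u' q + 1 = G.dist u q := by
  have hu' := hB hu hadj
  have h_before := hB.dist_eq_add hG (.inl hu) hs
  have h_after := hB.dist_eq_add hG hu' hs
  have h_step := dist_le_succ_of_adj hG hadj q
  exact ⟨hu', by lia⟩

theorem ExitsOnlyThrough.two_le_dist {B : Set V} {q : V} (hB : ExitsOnlyThrough G B q)
    (hG : G.Connected) {u s : V} (hu : u ∈ B) (hs : s ∉ B) (hsq : s ≠ q) :
    2 ≤ G.dist u s :=
  hG.one_lt_dist_of_ne_of_not_adj (ne_of_mem_of_not_mem hu hs)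
    fun hadj ↦ (hB hu hadj).elim hs hsq

end CutVertex

/-! ### Gaps -/

section Gap

variable {κ : Type*} [Fintype κ]

/-- The potential of the chase along an arm: the gaps `g` (how far the zombies lag behind) are at
most some `s`, with at most `(B - s) / 4` exceptions. -/
def GapBound (g : κ → ℕ) (B : ℕ) : Prop :=
  ∃ s, s + 4 * Finset.card {i | s < g i} ≤ B

theorem GapBound.mono {g g' : κ → ℕ} {B B' : ℕ} (h : GapBound g B) (hg : ∀ i, g' i ≤ g i)
    (hB : B ≤ B') : GapBound g' B' := by
  obtain ⟨s, hs⟩ := h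
  refine ⟨s, le_trans ?_ (hs.trans hB)⟩
  gcongr with i
  exact hg i

theorem GapBound.sub_one {g : κ → ℕ} {B : ℕ} (h : GapBound g B) {i : κ} (hi_pos : 0 < g i)
    (hi_le : g i ≤ 4) : 1 ≤ B ∧ GapBound (fun i ↦ g i - 1) (B - 1) := by
  have exists_pos : ∃ s, s + 1 + 4 * Finset.card {i | s + 1 < g i} ≤ B := by
    obtain ⟨_ | s, hs⟩ := h
    · have hlt : Finset.card {i | 4 < g i} < Finset.card {i | 0 < g i} :=
        Finset.card_lt_card <| Finset.ssubset_iff_of_subset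
          (Finset.monotone_filter_right _ fun _ _ h ↦ (Nat.zero_lt_succ 3).trans h) |>.2
          ⟨i, by simpa using hi_pos, by simpa using hi_le⟩
      exact ⟨3, by lia⟩
    · exact ⟨s, hs⟩
  obtain ⟨s, hs⟩ := exists_pos
  refine ⟨by lia, s, ?_⟩
  simp only [Nat.lt_sub_iff_add_lt]
  lia

theorem GapBound.of_embedding {q : ℕ} {τ : Fin q ↪ κ} {g : κ → ℕ} {B s : ℕ} {i : κ}
    (hi : i ∉ Set.range τ) (hgi : g i ≤ s) (hgτ : ∀ a, g (τ a) ≤ s)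
    (hB : s + 4 * (Fintype.card κ - (q + 1)) ≤ B) : GapBound g B := by
  classical
  let A := Finset.cons i (Finset.univ.map τ) (by simpa using hi)
  have gap_le_of_mem (t : κ) (ht : t ∈ A) : g t ≤ s := by
    have : t = i ∨ ∃ a, τ a = t := by simpa [A] using ht
    obtain rfl | ⟨a, rfl⟩ := this
    · exact hgi
    · exact hgτ a
  have card_A : A.card = q + 1 := by
    simp only [A, Finset.card_cons, Finset.card_map, Finset.card_univ, Fintype.card_fin]
  refine ⟨s, le_trans ?_ hB⟩
  rw [← card_A, ← Finset.card_compl]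
  gcongr
  intro t ht
  rw [Finset.mem_filter] at ht
  exact Finset.mem_compl.2 fun hA ↦ (gap_le_of_mem t hA).not_gt ht.2

theorem exists_embedding_le {α : Type*} [LinearOrder α] {j q : ℕ} (hq : q ≤ j) (d : Fin j → α) :
    ∃ τ : Fin q ↪ Fin j, ∀ i ∉ Set.range τ, ∀ a, d (τ a) ≤ d i := by
  let σ := Tuple.sort d
  refine ⟨(Fin.castLEEmb hq).trans σ.toEmbedding, fun i hi a ↦ ?_⟩
  have hle : Fin.castLE hq a ≤ σ.symm i := by
    by_contra! hlt
    exact hi ⟨⟨σ.symm i, Nat.lt_trans hlt a.2⟩, σ.apply_symm_apply i⟩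
  simpa [σ] using Tuple.monotone_sort d hle

end Gap

/-! ### The arm graph -/

section ArmGraph

instance : DecidableRel fin5adj := fun _ _ ↦ inferInstanceAs (Decidable (_ ∨ _))

theorem fin5adj_ne {i j : Fin 5} (h : fin5adj i j) : i ≠ j := by
  decide +revert

theorem fin5adj_midpoint_unique {i j l l' : Fin 5} (hij : i ≠ j) (hil : fin5adj i l)
    (hlj : fin5adj l j) (hil' : l' = i ∨ fin5adj i l') (hjl' : l' = j ∨ fin5adj j l') :
    l' = l := by
  decide +revert

theorem not_fin5adj_of_midpoint {i j l : Fin 5} (hij : i ≠ j) (hil : fin5adj i l)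
    (hlj : fin5adj l j) : ¬ fin5adj i j := by
  decide +revert

namespace ArmVert

variable {n : ℕ}

/-- The position of a vertex along the arm: `0` at the start, `x + 1` in the copy `T_x` and `n + 1`
at the finish.  Edges join vertices of equal or consecutive levels. -/
def level : ArmVert n → ℕ
  | .start => 0
  | .finish => n + 1
  | .inner x _ | .outer x _ | .center x => x + 1

/-- The vertices `a_j` and `b_j` of the copy `T_x`.  The argument only tracks zombies in `T_x` up to
their spoke. -/
def spoke (x : Fin n) (j : Fin 5) : Set (ArmVert n) :=
  {inner x j, outer x j}

theorem outer_mem_spoke (x : Fin n) (j : Fin 5) : outer x j ∈ spoke x j :=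
  .inr rfl

theorem level_of_mem_spoke {x : Fin n} {j : Fin 5} {a : ArmVert n} (ha : a ∈ spoke x j) :
    a.level = x + 1 := by
  obtain rfl | rfl := ha <;> rfl

theorem eq_of_mem_spoke {x : Fin n} {i j : Fin 5} {a : ArmVert n} (hi : a ∈ spoke x i)
    (hj : a ∈ spoke x j) : i = j := by
  obtain rfl | rfl := hi <;> obtain hj | hj := hj <;> cases hj <;> rfl

theorem center_notMem_spoke (x : Fin n) (j : Fin 5) : center x ∉ spoke x j := by
  simp [spoke]

end ArmVert

instance (n : ℕ) : Finite (ArmVert n) := by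
  let code : ArmVert n → Bool ⊕ (Bool × Fin n × Fin 5) ⊕ Fin n
    | .start => .inl true
    | .finish => .inl false
    | .inner x i => .inr (.inl (true, x, i))
    | .outer x i => .inr (.inl (false, x, i))
    | .center x => .inr (.inr x)
  refine Finite.of_injective code ?_
  rintro (_ | _ | _ | _ | _) (_ | _ | _ | _ | _) <;> simp [code]

open ArmVert

variable {n : ℕ} {x y : Fin n} {i j l : Fin 5} {a b : ArmVert n}

theorem armGraph_adj :
    (armGraph n).Adj a b ↔ a ≠ b ∧ (armRel n a b ∨ armRel n b a) :=
  Iff.rfl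

theorem armGraph_adj_of_armRel (hne : a ≠ b) (h : armRel n a b) : (armGraph n).Adj a b :=
  ⟨hne, .inl h⟩

theorem armGraph_adj_start_outer (hx : (x : ℕ) = 0) :
    (armGraph n).Adj start (outer x 0) :=
  armGraph_adj_of_armRel nofun ⟨hx, rfl⟩

theorem armGraph_adj_outer_succ (hxy : (x : ℕ) + 1 = y) :
    (armGraph n).Adj (outer x 2) (outer y 0) :=
  armGraph_adj_of_armRel (by simp) (.inr ⟨hxy, rfl, rfl⟩)

theorem armGraph_adj_outer_of_mem_spoke (ha : a ∈ spoke x i) (hij : fin5adj i j) :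
    (armGraph n).Adj a (outer x j) := by
  obtain rfl | rfl := ha
  · exact armGraph_adj_of_armRel nofun ⟨rfl, .inr hij⟩
  · exact armGraph_adj_of_armRel (by simpa using fin5adj_ne hij) (.inl ⟨rfl, hij⟩)

theorem armGraph_adj_spoke (ha : a ∈ spoke x j) (h : (armGraph n).Adj a b) :
    (∃ l, (l = j ∨ fin5adj j l) ∧ b ∈ spoke x l) ∨ b = center x ∨
      (j = 0 ∧ b.level = x) ∨ (j = 2 ∧ b.level = x + 2) := by
  rw [armGraph_adj] at h
  obtain rfl | rfl := ha <;> cases b <;> simp_all [armRel, level, spoke, fin5adj] <;> grind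

theorem armGraph_not_adj_center_outer : ¬ (armGraph n).Adj (center x) (outer y j) := by
  simp [armGraph_adj, armRel]

theorem armGraph_eq_outer_of_level_lt (h : (armGraph n).Adj a b) (ha : a.level ≤ x)
    (hb : x < b.level) : b = outer x 0 := by
  rw [armGraph_adj] at h
  have hn := x.pos
  cases a <;> cases b <;> simp_all [armRel, level] <;> grind

theorem armGraph_eq_outer_of_adj_entry (h : (armGraph n).Adj b (outer y 0)) (hb : b.level ≤ y)
    (hxy : (x : ℕ) + 1 = y) : b = outer x 2 := by
  rw [armGraph_adj] at h
  cases b <;> simp_all [armRel, level]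
  grind

theorem armGraph_mem_spoke_of_midpoint (hij : i ≠ j) (hil : fin5adj i l) (hlj : fin5adj l j)
    (ha : a ∈ spoke x i) (hab : (armGraph n).Adj a b) (hb : (armGraph n).Adj b (outer x j)) :
    b ∈ spoke x l := by
  have level_eq {l} (h : b ∈ spoke x l) := level_of_mem_spoke h
  obtain ⟨l₁, hl₁, hbl₁⟩ | rfl | ⟨hi, hlevel⟩ | ⟨hi, hlevel⟩ := armGraph_adj_spoke ha hab
  · obtain ⟨l₂, hl₂, hbl₂⟩ | rfl | ⟨-, hlevel⟩ | ⟨-, hlevel⟩ :=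
      armGraph_adj_spoke (outer_mem_spoke x j) hb.symm
    · obtain rfl := eq_of_mem_spoke hbl₁ hbl₂
      rwa [← fin5adj_midpoint_unique hij hil hlj hl₁ hl₂]
    · exact absurd hbl₁ (center_notMem_spoke x l₁)
    all_goals have := level_eq hbl₁; lia
  · exact absurd hb armGraph_not_adj_center_outer
  all_goals
    obtain ⟨l₂, -, hbl₂⟩ | rfl | ⟨hj, hlevel'⟩ | ⟨hj, hlevel'⟩ :=
      armGraph_adj_spoke (outer_mem_spoke x j) hb.symm
    · have := level_eq hbl₂; lia
    · exact absurd hb armGraph_not_adj_center_outer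
    all_goals first | exact absurd (hi.trans hj.symm) hij | lia

theorem armGraph_not_adj_outer_of_midpoint (hij : i ≠ j) (hil : fin5adj i l)
    (hlj : fin5adj l j) (ha : a ∈ spoke x i) : ¬ (armGraph n).Adj a (outer x j) := by
  intro h
  obtain ⟨l', hl', hj⟩ | h | ⟨-, h⟩ | ⟨-, h⟩ := armGraph_adj_spoke ha h
  · obtain rfl := eq_of_mem_spoke hj (outer_mem_spoke x j)
    exact hl'.elim (fun h ↦ hij h.symm) (not_fin5adj_of_midpoint hij hil hlj)
  · cases h
  all_goals rw [level] at h; lia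

theorem armGraph_reachable_outer_zero (h : (armGraph n).Reachable start (outer x 0)) (j : Fin 5) :
    (armGraph n).Reachable start (outer x j) := by
  have step {i j : Fin 5} (hij : fin5adj i j) (h : (armGraph n).Reachable start (outer x i)) :
      (armGraph n).Reachable start (outer x j) :=
    h.trans (armGraph_adj_outer_of_mem_spoke (outer_mem_spoke x i) hij).reachable
  have h₁ := step (j := 1) (by decide) h
  have h₄ := step (j := 4) (by decide) h
  fin_cases j
  exacts [h, h₁, step (by decide) h₁, step (by decide) h₄, h₄]

theorem armGraph_reachable_outer (x : Fin n) (j : Fin 5) :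
    (armGraph n).Reachable start (outer x j) := by
  obtain ⟨x, hx⟩ := x
  refine armGraph_reachable_outer_zero ?_ j
  induction x with
  | zero => exact (armGraph_adj_start_outer rfl).reachable
  | succ x ih =>
    exact (armGraph_reachable_outer_zero (ih (by lia)) 2).trans
      (armGraph_adj_outer_succ rfl).reachable

theorem armGraph_reachable (a : ArmVert n) : (armGraph n).Reachable start a := by
  have step {a b : ArmVert n} (ha : (armGraph n).Reachable start a) (hab : (armGraph n).Adj a b) :
      (armGraph n).Reachable start b :=
    ha.trans hab.reachable
  have reachable_inner (x : Fin n) (j : Fin 5) : (armGraph n).Reachable start (inner x j) :=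
    step (armGraph_reachable_outer x j) ⟨nofun, .inr ⟨rfl, .inl rfl⟩⟩
  cases a with
  | start => exact .refl _
  | inner x j => exact reachable_inner x j
  | outer x j => exact armGraph_reachable_outer x j
  | center x => exact step (reachable_inner x 0) ⟨nofun, .inl rfl⟩
  | finish =>
    cases n with
    | zero => exact step (.refl _) ⟨nofun, .inl rfl⟩
    | succ n => exact step (armGraph_reachable_outer (Fin.last n) 2) ⟨nofun, .inl ⟨rfl, rfl⟩⟩

end ArmGraph

/-! ### Escape along an arm -/

section ArmChase

open ArmVert

variable {V κ : Type*} {G : SimpleGraph V} {n : ℕ} {v : V} {f : armGraph n ↪g G} {x y : Fin n}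
  {i j l : Fin 5}

/-- The embedding `f` exhibits the arm graph `A_n` as an arm of `G` hanging from the vertex `v`:
its only edge to the rest of `G` joins `b₂⁻¹` to `v`. -/
structure IsArm (v : V) (f : armGraph n ↪g G) : Prop where
  adj_root : G.Adj v (f start)
  root_notMem_range : v ∉ Set.range f
  mem_range_or_eq_of_adj : ∀ ⦃u a⦄, G.Adj u (f a) → u ∈ Set.range f ∨ u = v ∧ a = start

/-- The vertices of `G` that are outside the arm or precede the copy `T_x`, from the point of view
of a survivor at or beyond `T_x`. -/
def behind (f : armGraph n ↪g G) (x : Fin n) : Set V :=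
  {u | ∀ a, f a = u → a.level ≤ x}

open Classical in
/-- The distance to the vertex `b₀` through which `T_x` is entered, for vertices behind `T_x`. -/
noncomputable def entryGap (f : armGraph n ↪g G) (x : Fin n) (u : V) : ℕ :=
  if u ∈ behind f x then G.dist u (f (outer x 0)) else 0

theorem map_mem_behind {a : ArmVert n} : f a ∈ behind f x ↔ a.level ≤ x :=
  ⟨fun h ↦ h a rfl, fun h _ hb ↦ f.injective hb ▸ h⟩

theorem behind_mono (hxy : x ≤ y) : behind f x ⊆ behind f y :=
  fun _ hu a ha ↦ (hu a ha).trans hxy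

theorem mem_behind_of_notMem_range {u : V} (hu : u ∉ Set.range f) : u ∈ behind f x :=
  fun a ha ↦ (hu ⟨a, ha⟩).elim

theorem outer_notMem_behind : f (outer x j) ∉ behind f x := by
  simp [map_mem_behind, level]

theorem notMem_behind_of_mem_spoke {u : V} (hu : u ∈ f '' spoke x j) : u ∉ behind f x := by
  obtain ⟨a, ha, rfl⟩ := hu
  simp [map_mem_behind, level_of_mem_spoke ha]

theorem mem_behind_of_mem_spoke {u : V} (hu : u ∈ f '' spoke x j) (hxy : x < y) :
    u ∈ behind f y := by
  obtain ⟨a, ha, rfl⟩ := hu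
  simpa [map_mem_behind, level_of_mem_spoke ha] using hxy

theorem entryGap_of_mem_behind {u : V} (hu : u ∈ behind f x) :
    entryGap f x u = G.dist u (f (outer x 0)) :=
  if_pos hu

theorem entryGap_of_mem_spoke {u : V} (hu : u ∈ f '' spoke x j) : entryGap f x u = 0 :=
  if_neg (notMem_behind_of_mem_spoke hu)

theorem adj_outer_of_mem_spoke {u : V} (hu : u ∈ f '' spoke x i) (hij : fin5adj i j) :
    G.Adj u (f (outer x j)) := by
  obtain ⟨a, ha, rfl⟩ := hu
  exact f.map_adj_iff.2 (armGraph_adj_outer_of_mem_spoke ha hij)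

theorem adj_outer_outer (hij : fin5adj i j) : G.Adj (f (outer x i)) (f (outer x j)) :=
  adj_outer_of_mem_spoke ⟨_, outer_mem_spoke x i, rfl⟩ hij

theorem adj_outer_succ (hxy : (x : ℕ) + 1 = y) : G.Adj (f (outer x 2)) (f (outer y 0)) :=
  f.map_adj_iff.2 (armGraph_adj_outer_succ hxy)

theorem IsArm.exists_eq_of_adj_outer (hf : IsArm v f) {u : V} (h : G.Adj u (f (outer x j))) :
    ∃ b, f b = u ∧ (armGraph n).Adj b (outer x j) := by
  obtain ⟨b, rfl⟩ | ⟨-, h⟩ := hf.mem_range_or_eq_of_adj h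
  · exact ⟨b, rfl, f.map_adj_iff.1 h⟩
  · cases h

theorem IsArm.exitsOnlyThrough_behind (hf : IsArm v f) (x : Fin n) :
    ExitsOnlyThrough G (behind f x) (f (outer x 0)) := by
  intro u w hu huw
  by_contra! hw
  obtain ⟨b, rfl, hb⟩ : ∃ b, f b = w ∧ x < b.level := by simpa [behind] using hw.1
  obtain ⟨a, rfl⟩ | ⟨-, rfl⟩ := hf.mem_range_or_eq_of_adj huw
  · exact hw.2 (congrArg f (armGraph_eq_outer_of_level_lt (f.map_adj_iff.1 huw)
      (map_mem_behind.1 hu) hb))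
  · exact absurd hb (Nat.not_lt_zero _)

theorem IsArm.move_behind (hf : IsArm v f) (hG : G.Connected) {u u' s : V} (hu : u ∈ behind f x)
    (hs : s ∉ behind f x) (hmove : G.Adj u u' ∧ G.dist u' s < G.dist u s) :
    (u' ∈ behind f x ∨ u' ∈ f '' spoke x 0) ∧ entryGap f x u' + 1 = entryGap f x u ∧
      G.dist u' (f (outer x 0)) + 1 = entryGap f x u := by
  obtain ⟨hu', hdist⟩ := (hf.exitsOnlyThrough_behind x).move hG hu hs hmove.1 hmove.2
  rw [entryGap_of_mem_behind hu]
  obtain hu' | rfl := hu'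
  · exact ⟨.inl hu', by rwa [entryGap_of_mem_behind hu'], hdist⟩
  · have hspoke : f (outer x 0) ∈ f '' spoke x 0 := ⟨_, outer_mem_spoke x 0, rfl⟩
    exact ⟨.inr hspoke, by rwa [entryGap_of_mem_spoke hspoke, ← dist_self (G := G)], hdist⟩

theorem two_le_dist_of_mem_spoke (hG : G.Connected) (hij : i ≠ j)
    (hil : fin5adj i l) (hlj : fin5adj l j) {u : V} (hu : u ∈ f '' spoke x i) :
    2 ≤ G.dist u (f (outer x j)) := by
  obtain ⟨a, ha, rfl⟩ := hu
  refine hG.one_lt_dist_of_ne_of_not_adj (fun h ↦ hij ?_) fun h ↦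
    armGraph_not_adj_outer_of_midpoint hij hil hlj ha (f.map_adj_iff.1 h)
  rw [f.injective h] at ha
  exact eq_of_mem_spoke ha (outer_mem_spoke x j)

theorem IsArm.move_spoke (hf : IsArm v f) (hG : G.Connected) (hij : i ≠ j) (hil : fin5adj i l)
    (hlj : fin5adj l j) {u u' : V} (hu : u ∈ f '' spoke x i)
    (hmove : G.Adj u u' ∧ G.dist u' (f (outer x j)) < G.dist u (f (outer x j))) :
    u' ∈ f '' spoke x l := by
  have dist_u : G.dist u (f (outer x j)) ≤ 2 := by
    have h := dist_le_succ_of_adj hG (adj_outer_of_mem_spoke hu hil) (f (outer x j))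
    rwa [dist_eq_one_iff_adj.2 (adj_outer_outer hlj)] at h
  obtain ⟨a, ha, rfl⟩ := hu
  have u'_ne : u' ≠ f (outer x j) := by
    rintro rfl
    exact armGraph_not_adj_outer_of_midpoint hij hil hlj ha (f.map_adj_iff.1 hmove.1)
  have u'_adj : G.Adj u' (f (outer x j)) := by
    by_contra h
    have := hG.one_lt_dist_of_ne_of_not_adj u'_ne h
    lia
  obtain ⟨b, rfl, hb⟩ := hf.exists_eq_of_adj_outer u'_adj
  exact ⟨b, armGraph_mem_spoke_of_midpoint hij hil hlj ha (f.map_adj_iff.1 hmove.1) hb, rfl⟩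

variable [Fintype κ] {r : ℕ} {z z' : κ → V} {s : V}

/-- The survivor runs around the outer cycle of `T_x`, three spokes ahead of the zombies that have
entered `T_x`; they sit on spoke `r`, counted modulo `5`, and decrease `r` by one in each round.
Subtracting `r` from the gaps discounts the moves until the zombies next pass the entry. -/
structure Rotating (f : armGraph n ↪g G) (x : Fin n) (r : ℕ) (z : κ → V) (s : V) : Prop where
  survivor_eq : s = f (outer x (Fin.ofNat 5 (r + 3)))
  zombie_mem : ∀ t, (z t ∈ behind f x ∧ r ≤ entryGap f x (z t)) ∨
    z t ∈ f '' spoke x (Fin.ofNat 5 r)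
  gapBound : GapBound (fun t ↦ entryGap f x (z t) - r) (n - 1 - x)

/-- The survivor stands at the exit of `T_x` and moves on to the next copy `T_y`. -/
structure Leaving (f : armGraph n ↪g G) (x y : Fin n) (z : κ → V) (s : V) : Prop where
  succ_eq : (x : ℕ) + 1 = y
  survivor_eq : s = f (outer x 2)
  zombie_mem : ∀ t, z t ∈ behind f x ∨ z t ∈ f '' spoke x 0 ∨ z t ∈ f '' spoke x 4
  gapBound : GapBound (fun t ↦ entryGap f x (z t)) (n - 1 - y)

theorem fin5adj_ofNat {a b : ℕ} :
    fin5adj (Fin.ofNat 5 a) (Fin.ofNat 5 b) ↔ (a + 1) % 5 = b % 5 ∨ (b + 1) % 5 = a % 5 := by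
  simp [fin5adj]

theorem ofNat_ne_ofNat {a b : ℕ} : Fin.ofNat 5 a ≠ Fin.ofNat 5 b ↔ a % 5 ≠ b % 5 := by
  simp [Fin.ext_iff]

theorem Rotating.two_le_dist (hf : IsArm v f) (hG : G.Connected) (h : Rotating f x r z s) (t : κ) :
    2 ≤ G.dist (z t) s := by
  obtain ⟨rfl, hz, -⟩ := h
  obtain ⟨hbehind, hr⟩ | hspoke := hz t
  · by_cases h_entry : Fin.ofNat 5 (r + 3) = 0
    · rw [entryGap_of_mem_behind hbehind] at hr
      have : (r + 3) % 5 = 0 := congrArg Fin.val h_entry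
      rw [h_entry]
      lia
    · exact (hf.exitsOnlyThrough_behind x).two_le_dist hG hbehind outer_notMem_behind
        (by simpa using h_entry)
  · exact two_le_dist_of_mem_spoke hG (ofNat_ne_ofNat.2 (by lia))
      (l := Fin.ofNat 5 (r + 4)) (fin5adj_ofNat.2 (by lia)) (fin5adj_ofNat.2 (by lia)) hspoke

theorem Rotating.step (hf : IsArm v f) (hG : G.Connected) (h : Rotating f x (r + 1) z s)
    (hmove : ZombieMove G z z' s) : ∃ s', G.Adj s s' ∧ Rotating f x r z' s' := by
  obtain ⟨rfl, hz, hgap⟩ := h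
  have zombie (t : κ) :
      ((z' t ∈ behind f x ∧ r ≤ entryGap f x (z' t)) ∨ z' t ∈ f '' spoke x (Fin.ofNat 5 r)) ∧
        entryGap f x (z' t) - r ≤ entryGap f x (z t) - (r + 1) := by
    obtain ⟨hbehind, hr⟩ | hspoke := hz t
    · obtain ⟨hbehind' | hspoke', hgap', -⟩ :=
        hf.move_behind hG hbehind outer_notMem_behind (hmove t)
      · exact ⟨.inl ⟨hbehind', by lia⟩, by lia⟩
      · rw [entryGap_of_mem_spoke hspoke'] at hgap' ⊢
        obtain rfl : r = 0 := by lia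
        exact ⟨.inr hspoke', Nat.zero_le _⟩
    · have hspoke' := hf.move_spoke hG (ofNat_ne_ofNat.2 (by lia)) (l := Fin.ofNat 5 r)
        (fin5adj_ofNat.2 (by lia)) (fin5adj_ofNat.2 (by lia)) hspoke (hmove t)
      exact ⟨.inr hspoke', by simp [entryGap_of_mem_spoke hspoke']⟩
  exact ⟨_, adj_outer_outer (fin5adj_ofNat.2 (by lia)), rfl, fun t ↦ (zombie t).1,
    hgap.mono (fun t ↦ (zombie t).2) le_rfl⟩

theorem Rotating.leave (hf : IsArm v f) (hG : G.Connected) (h : Rotating f x 0 z s)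
    {t : κ} (hpos : 0 < entryGap f x (z t)) (hle : entryGap f x (z t) ≤ 4)
    (hmove : ZombieMove G z z' s) : ∃ y s', G.Adj s s' ∧ Leaving f x y z' s' := by
  obtain ⟨rfl, hz, hgap⟩ := h
  obtain ⟨hB, hgap⟩ := hgap.sub_one (i := t) hpos hle
  have zombie (t : κ) :
      (z' t ∈ behind f x ∨ z' t ∈ f '' spoke x 0 ∨ z' t ∈ f '' spoke x 4) ∧
        entryGap f x (z' t) ≤ entryGap f x (z t) - 1 := by
    obtain ⟨hbehind, -⟩ | hspoke := hz t
    · obtain ⟨hmem, hgap', -⟩ := hf.move_behind hG hbehind outer_notMem_behind (hmove t)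
      exact ⟨hmem.imp_right .inl, by lia⟩
    · have hspoke' := hf.move_spoke hG (by decide) (l := 4) (by decide) (by decide) hspoke
        (hmove t)
      exact ⟨.inr (.inr hspoke'), by simp [entryGap_of_mem_spoke hspoke']⟩
  exact ⟨⟨x + 1, by lia⟩, _, adj_outer_outer (by decide), rfl, rfl, fun t ↦ (zombie t).1,
    hgap.mono (fun t ↦ (zombie t).2) (by simp only; lia)⟩

theorem Leaving.two_le_dist (hf : IsArm v f) (hG : G.Connected) (h : Leaving f x y z s) (t : κ) :
    2 ≤ G.dist (z t) s := by
  obtain ⟨-, rfl, hz, -⟩ := h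
  obtain hbehind | hspoke | hspoke := hz t
  · exact (hf.exitsOnlyThrough_behind x).two_le_dist hG hbehind outer_notMem_behind
      (f.injective.ne (by simp))
  · exact two_le_dist_of_mem_spoke hG (by decide) (l := 1) (by decide) (by decide) hspoke
  · exact two_le_dist_of_mem_spoke hG (by decide) (l := 3) (by decide) (by decide) hspoke

theorem IsArm.two_le_dist_next_entry (hf : IsArm v f) (hG : G.Connected) (hxy : (x : ℕ) + 1 = y)
    {u : V} (hu : u ∈ behind f x ∨ ∃ j ≠ 2, u ∈ f '' spoke x j) :
    u ∈ behind f y ∧ 2 ≤ G.dist u (f (outer y 0)) := by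
  have hbehind : u ∈ behind f y := by
    obtain hu | ⟨j, -, hu⟩ := hu
    · exact behind_mono (Fin.le_def.2 (by lia)) hu
    · exact mem_behind_of_mem_spoke hu (Fin.lt_def.2 (by lia))
  refine ⟨hbehind, hG.one_lt_dist_of_ne_of_not_adj
    (ne_of_mem_of_not_mem hbehind outer_notMem_behind) fun hadj ↦ ?_⟩
  obtain ⟨b, rfl, hb⟩ := hf.exists_eq_of_adj_outer hadj
  obtain rfl := armGraph_eq_outer_of_adj_entry hb (map_mem_behind.1 hbehind) hxy
  obtain hu | ⟨j, hj, b, hb, heq⟩ := hu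
  · exact outer_notMem_behind hu
  · rw [f.injective heq] at hb
    exact hj (eq_of_mem_spoke hb (outer_mem_spoke x 2))

theorem Leaving.step (hf : IsArm v f) (hG : G.Connected) (h : Leaving f x y z s)
    (hmove : ZombieMove G z z' s) : ∃ s', G.Adj s s' ∧ Rotating f y 2 z' s' := by
  obtain ⟨hxy, rfl, hz, hgap⟩ := h
  have dist_exit : G.dist (f (outer x 2)) (f (outer y 0)) = 1 :=
    dist_eq_one_iff_adj.2 (adj_outer_succ hxy)
  have dist_adj_exit {u : V} (hu : G.Adj u (f (outer x 2))) : G.dist u (f (outer y 0)) ≤ 2 := by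
    have := dist_le_succ_of_adj hG hu (f (outer y 0))
    lia
  have dist_entry : G.dist (f (outer x 0)) (f (outer y 0)) ≤ 3 := by
    have h₀ := dist_le_succ_of_adj hG (adj_outer_outer (f := f) (x := x) (i := 0) (j := 1)
      (by decide)) (f (outer y 0))
    have h₁ := dist_adj_exit (adj_outer_outer (f := f) (x := x) (i := 1) (j := 2) (by decide))
    lia
  have zombie (t : κ) : (z' t ∈ behind f y ∧ 2 ≤ G.dist (z' t) (f (outer y 0))) ∧
      G.dist (z' t) (f (outer y 0)) - 2 ≤ entryGap f x (z t) := by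
    obtain hbehind | hspoke | hspoke := hz t
    · obtain ⟨hmem, -, hdist⟩ := hf.move_behind hG hbehind outer_notMem_behind (hmove t)
      have := hG.dist_triangle (u := z' t) (v := f (outer x 0)) (w := f (outer y 0))
      exact ⟨hf.two_le_dist_next_entry hG hxy
        (hmem.imp_right fun hmem ↦ ⟨0, by decide, hmem⟩), by lia⟩
    · have hmem := hf.move_spoke hG (by decide) (l := 1) (by decide) (by decide) hspoke (hmove t)
      have := dist_adj_exit (adj_outer_of_mem_spoke hmem (by decide))
      exact ⟨hf.two_le_dist_next_entry hG hxy (.inr ⟨1, by decide, hmem⟩), by lia⟩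
    · have hmem := hf.move_spoke hG (by decide) (l := 3) (by decide) (by decide) hspoke (hmove t)
      have := dist_adj_exit (adj_outer_of_mem_spoke hmem (by decide))
      exact ⟨hf.two_le_dist_next_entry hG hxy (.inr ⟨3, by decide, hmem⟩), by lia⟩
  have gap_eq (t : κ) := entryGap_of_mem_behind (zombie t).1.1
  refine ⟨_, adj_outer_succ hxy, rfl, fun t ↦ .inl ?_, hgap.mono (fun t ↦ ?_) le_rfl⟩
  · rw [gap_eq]
    exact (zombie t).1
  · rw [gap_eq]
    exact (zombie t).2

theorem Rotating.evades (hf : IsArm v f) (hG : G.Connected) (h : Rotating f x r z s) :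
    Evades G z s := by
  let S (z : κ → V) (s : V) : Prop := ∃ x, (∃ r, Rotating f x r z s) ∨ ∃ y, Leaving f x y z s
  refine evades_of_invariant (S := S) ?_ ⟨x, .inl ⟨r, h⟩⟩
  rintro z s ⟨x, ⟨r, h⟩ | ⟨y, h⟩⟩
  · refine ⟨h.two_le_dist hf hG, fun z' hmove ↦ ?_⟩
    cases r with
    | succ r =>
      obtain ⟨s', hs', h'⟩ := h.step hf hG hmove
      exact ⟨s', .inr hs', .inl ⟨x, .inl ⟨r, h'⟩⟩⟩
    | zero =>
      by_cases hnear : ∃ t, 0 < entryGap f x (z t) ∧ entryGap f x (z t) ≤ 4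
      · obtain ⟨t, hpos, hle⟩ := hnear
        obtain ⟨y, s', hs', h'⟩ := h.leave hf hG hpos hle hmove
        exact ⟨s', .inr hs', .inl ⟨x, .inr ⟨y, h'⟩⟩⟩
      · have h₅ : Rotating f x 5 z s := by
          refine ⟨h.survivor_eq, fun t ↦ (h.zombie_mem t).imp_left fun ⟨hbehind, _⟩ ↦
            ⟨hbehind, ?_⟩, h.gapBound.mono (fun t ↦ Nat.sub_le _ 5) le_rfl⟩
          have hpos : 0 < entryGap f x (z t) := by
            rw [entryGap_of_mem_behind hbehind]
            exact hG.pos_dist_of_ne (ne_of_mem_of_not_mem hbehind outer_notMem_behind)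
          exact not_le.1 fun hle ↦ hnear ⟨t, hpos, hle⟩
        obtain ⟨s', hs', h'⟩ := h₅.step hf hG hmove
        exact ⟨s', .inr hs', .inl ⟨x, .inl ⟨4, h'⟩⟩⟩
  · refine ⟨h.two_le_dist hf hG, fun z' hmove ↦ ?_⟩
    obtain ⟨s', hs', h'⟩ := h.step hf hG hmove
    exact ⟨s', .inr hs', .inl ⟨y, .inl ⟨2, h'⟩⟩⟩

theorem IsArm.exitsOnlyThrough_root (hf : IsArm v f) :
    ExitsOnlyThrough G {u | u ∉ Set.range f ∧ u ≠ v} v := by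
  rintro u w ⟨hu, huv⟩ huw
  by_contra! hw
  obtain ⟨a, rfl⟩ : w ∈ Set.range f := by simpa [hw.2] using hw.1
  exact (hf.mem_range_or_eq_of_adj huw).elim hu fun h ↦ huv h.1

theorem IsArm.evades_entry (hf : IsArm v f) (hG : G.Connected) (hn : 0 < n)
    (hz : ∀ t, z t ∉ Set.range f)
    (hgap : GapBound (fun t ↦ G.dist (z t) (f (outer ⟨0, hn⟩ 0)) - 2) (n - 1)) :
    Evades G z (f (outer ⟨0, hn⟩ 0)) := by
  have hbehind (t : κ) : z t ∈ behind f ⟨0, hn⟩ := mem_behind_of_notMem_range (hz t)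
  have gap_eq (t : κ) := entryGap_of_mem_behind (hbehind t)
  have h : Rotating f ⟨0, hn⟩ 2 z (f (outer ⟨0, hn⟩ 0)) := by
    refine ⟨rfl, fun t ↦ .inl ⟨hbehind t, ?_⟩, ?_⟩
    · rw [gap_eq]
      refine hG.one_lt_dist_of_ne_of_not_adj
        (ne_of_mem_of_not_mem (hbehind t) outer_notMem_behind) fun hadj ↦ ?_
      obtain ⟨b, hb, -⟩ := hf.exists_eq_of_adj_outer hadj
      exact hz t ⟨b, hb⟩
    · exact hgap.mono (fun t ↦ by rw [gap_eq]) le_rfl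
  exact h.evades hf hG

theorem IsArm.dist_root_entry_le (hf : IsArm v f) (hG : G.Connected) (hn : 0 < n) :
    G.dist v (f (outer ⟨0, hn⟩ 0)) ≤ 2 := by
  have := dist_le_succ_of_adj hG hf.adj_root (f (outer ⟨0, hn⟩ 0))
  rwa [dist_eq_one_iff_adj.2 (f.map_adj_iff.2 (armGraph_adj_start_outer rfl))] at this

theorem IsArm.evades_root (hf : IsArm v f) (hG : G.Connected) (hn : 0 < n)
    (hz : ∀ t, z t ∉ Set.range f) (hdist : ∀ t, 2 ≤ G.dist (z t) v)
    (hgap : GapBound (fun t ↦ G.dist (z t) v - 2) (n - 1)) : Evades G z v := by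
  have hz_ne (t : κ) : z t ≠ v := fun h ↦ by simpa [h] using hdist t
  refine .of_step hdist fun z₁ hmove₁ ↦ ⟨f start, .inr hf.adj_root, ?_⟩
  have hz₁_dist (t : κ) := dist_le_succ_of_adj hG (hmove₁ t).1 v
  have hz₁ (t : κ) : z₁ t ∉ Set.range f ∧ z₁ t ≠ v :=
    have hne : z₁ t ≠ v := fun h ↦ by
      have := (hdist t).trans (hz₁_dist t)
      simp [h] at this
    ⟨(hf.exitsOnlyThrough_root ⟨hz t, hz_ne t⟩ (hmove₁ t).1).elim And.left hne.elim, hne⟩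
  have hstart : f start ∉ {u | u ∉ Set.range f ∧ u ≠ v} := fun h ↦ h.1 ⟨_, rfl⟩
  refine .of_step (fun t ↦ hf.exitsOnlyThrough_root.two_le_dist hG (hz₁ t) hstart
    hf.adj_root.ne') fun z₂ hmove₂ ↦ ⟨f (outer ⟨0, hn⟩ 0),
      .inr (f.map_adj_iff.2 (armGraph_adj_start_outer rfl)), ?_⟩
  have hz₂ (t : κ) := hf.exitsOnlyThrough_root.move hG (hz₁ t) hstart (hmove₂ t).1 (hmove₂ t).2
  refine hf.evades_entry hG hn (fun t ↦ ?_) (hgap.mono (fun t ↦ ?_) le_rfl)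
  · obtain h | h := (hz₂ t).1
    · exact h.1
    · exact h ▸ hf.root_notMem_range
  · have := hf.dist_root_entry_le hG hn
    have := hG.dist_triangle (u := z₂ t) (v := v) (w := f (outer ⟨0, hn⟩ 0))
    have := (hz₂ t).2
    have := (hmove₁ t).2
    lia

end ArmChase

/-! ### Graphs with pendant pieces -/

section PendantExtension

variable {V W κ : Type*} {G : SimpleGraph V} {H : SimpleGraph W} {ι : H ↪g G} {root : V → W}

/-- The graph `G` consists of the copy `ι` of `H` and of pieces hanging from single vertices of `H`;
the piece of a vertex `u` hangs from `root u`, and no edge joins two pieces. -/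
structure IsPendantExtension (ι : H ↪g G) (root : V → W) : Prop where
  root_base : ∀ w, root (ι w) = w
  root_eq_of_adj : ∀ ⦃u u'⦄, G.Adj u u' → u ∉ Set.range ι → root u' = root u

/-- The distance from a vertex to the copy `ι` of `H`. -/
noncomputable def depth (ι : H ↪g G) (root : V → W) (u : V) : ℕ :=
  G.dist u (ι (root u))

namespace IsPendantExtension

theorem depth_base (h : IsPendantExtension ι root) (w : W) : depth ι root (ι w) = 0 := by
  rw [depth, h.root_base, dist_self]

theorem exitsOnlyThrough_base (h : IsPendantExtension ι root) (w : W) :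
    ExitsOnlyThrough G {u | u ∉ Set.range ι ∧ root u = w} (ι w) := by
  rintro u u' ⟨hu, rfl⟩ hadj
  have hroot := h.root_eq_of_adj hadj hu
  by_cases hu' : u' ∈ Set.range ι
  · obtain ⟨w, rfl⟩ := hu'
    rw [h.root_base] at hroot
    exact .inr (hroot ▸ rfl)
  · exact .inl ⟨hu', hroot⟩

theorem depth_le_dist (h : IsPendantExtension ι root) (hG : G.Connected) (u : V) (v : W) :
    depth ι root u ≤ G.dist u (ι v) := by
  by_cases hu : u ∈ Set.range ι
  · obtain ⟨w, rfl⟩ := hu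
    exact h.depth_base w ▸ Nat.zero_le _
  · rw [(h.exitsOnlyThrough_base (root u)).dist_eq_add hG (.inl ⟨hu, rfl⟩) fun hv ↦ hv.1 ⟨v, rfl⟩]
    exact Nat.le_add_right ..

theorem two_le_dist (h : IsPendantExtension ι root) (hG : G.Connected) {u : V} {v : W}
    (hv : ¬ (v = root u ∨ H.Adj (root u) v)) : 2 ≤ G.dist u (ι v) := by
  refine hG.one_lt_dist_of_ne_of_not_adj ?_ fun hadj ↦ hv ?_
  · rintro rfl
    exact hv (.inl (h.root_base v).symm)
  · by_cases hu : u ∈ Set.range ι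
    · obtain ⟨w, rfl⟩ := hu
      rw [h.root_base]
      exact .inr (ι.map_adj_iff.1 hadj)
    · exact .inl (by rw [← h.root_eq_of_adj hadj hu, h.root_base])

theorem move (h : IsPendantExtension ι root) (hG : G.Connected) {u u' : V} {v : W}
    (hmove : G.Adj u u' ∧ G.dist u' (ι v) < G.dist u (ι v)) :
    depth ι root u' = depth ι root u - 1 ∧ (root u' = root u ∨ H.Adj (root u) (root u')) := by
  have base_notMem (w : W) : ι v ∉ {u | u ∉ Set.range ι ∧ root u = w} := fun hv ↦ hv.1 ⟨v, rfl⟩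
  obtain ⟨hadj, hlt⟩ := hmove
  by_cases hu : u ∈ Set.range ι
  · obtain ⟨w, rfl⟩ := hu
    have hu' : u' ∈ Set.range ι := by
      by_contra hu'
      have hroot := h.root_eq_of_adj hadj.symm hu'
      rw [h.root_base] at hroot
      have := (h.exitsOnlyThrough_base w).dist_eq_add hG (.inl ⟨hu', hroot.symm⟩) (base_notMem w)
      lia
    obtain ⟨w', rfl⟩ := hu'
    rw [h.depth_base, h.depth_base, h.root_base, h.root_base]
    exact ⟨rfl, .inr (ι.map_adj_iff.1 hadj)⟩
  · have hroot := h.root_eq_of_adj hadj hu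
    have hdist := ((h.exitsOnlyThrough_base _).move hG ⟨hu, rfl⟩ (base_notMem _) hadj hlt).2
    exact ⟨by rw [depth, depth, hroot, ← hdist, Nat.add_sub_cancel], .inl hroot⟩

end IsPendantExtension

theorem dist_base_le_depth_add_two (hG : G.Connected)
    (hdiam : ∀ w w', G.dist (ι w) (ι w') ≤ 2) (u : V) (v : W) :
    G.dist u (ι v) ≤ depth ι root u + 2 :=
  hG.dist_triangle.trans (Nat.add_le_add_left (hdiam (root u) v) _)

/-- The survivor at the vertex `v` of `H` plays as a robber against the roots of the zombies
selected by `τ`; the other zombies are deeper in their pendant pieces, so they do not yet matter. -/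
structure Shadowing {q : ℕ} (ι : H ↪g G) (root : V → W) (τ : Fin q ↪ κ) (z : κ → V) (v : W) :
    Prop where
  robberSafe : RobberSafe H (fun a ↦ root (z (τ a))) v
  two_le_depth : ∀ i ∉ Set.range τ, 2 ≤ depth ι root (z i)
  depth_le : ∀ i ∉ Set.range τ, ∀ a, depth ι root (z (τ a)) ≤ depth ι root (z i)

variable {q n : ℕ} {τ : Fin q ↪ κ} {z z' : κ → V} {v : W}

theorem Shadowing.two_le_dist (h : Shadowing ι root τ z v) (hι : IsPendantExtension ι root)
    (hG : G.Connected) (i : κ) : 2 ≤ G.dist (z i) (ι v) := by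
  by_cases hi : i ∈ Set.range τ
  · obtain ⟨a, rfl⟩ := hi
    exact hι.two_le_dist hG (h.robberSafe.not_eq_or_adj a)
  · exact (h.two_le_depth i hi).trans (hι.depth_le_dist hG _ v)

theorem Shadowing.step (h : Shadowing ι root τ z v) (hι : IsPendantExtension ι root)
    (hG : G.Connected) (hdeep : ∀ i ∉ Set.range τ, 3 ≤ depth ι root (z i))
    (hmove : ZombieMove G z z' (ι v)) :
    ∃ v', (ι v' = ι v ∨ G.Adj (ι v) (ι v')) ∧ Shadowing ι root τ z' v' := by
  have hmove' (i : κ) := hι.move hG (hmove i)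
  obtain ⟨v', hv', hsafe⟩ := h.robberSafe.exists_response fun a ↦ (hmove' (τ a)).2
  refine ⟨v', hv'.imp (congrArg ι) ι.map_adj_iff.2, hsafe, fun i hi ↦ ?_, fun i hi a ↦ ?_⟩
  · rw [(hmove' i).1]
    exact Nat.le_sub_one_of_lt (hdeep i hi)
  · rw [(hmove' i).1, (hmove' (τ a)).1]
    exact Nat.sub_le_sub_right (h.depth_le i hi a) 1

variable [Fintype κ]

theorem Shadowing.evades (h : Shadowing ι root τ z v) (hι : IsPendantExtension ι root)
    (hG : G.Connected) (hdiam : ∀ w w', G.dist (ι w) (ι w') ≤ 2)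
    (hfree : ∀ (z : κ → V) w, ∃ f : armGraph n ↪g G, IsArm (ι w) f ∧ ∀ t, z t ∉ Set.range f)
    (hn : 4 * (Fintype.card κ - q) ≤ n) : Evades G z (ι v) := by
  refine evades_of_invariant (S := fun z s ↦ ∃ v, s = ι v ∧ Shadowing ι root τ z v) ?_ ⟨v, rfl, h⟩
  rintro z _ ⟨v, rfl, h⟩
  refine ⟨h.two_le_dist hι hG, fun z' hmove ↦ ?_⟩
  by_cases hdeep : ∀ i ∉ Set.range τ, 3 ≤ depth ι root (z i)
  · obtain ⟨v', hv', h'⟩ := h.step hι hG hdeep hmove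
    exact ⟨ι v', hv', .inl ⟨v', rfl, h'⟩⟩
  · push Not at hdeep
    obtain ⟨i, hi, hlt⟩ := hdeep
    obtain ⟨f, hf, hz⟩ := hfree z v
    have gap_le (t : κ) (ht : depth ι root (z t) ≤ 2) : G.dist (z t) (ι v) - 2 ≤ 3 := by
      have := dist_base_le_depth_add_two (root := root) hG hdiam (z t) v
      lia
    have hcard : q < Fintype.card κ := by
      simpa using Fintype.card_lt_of_injective_of_notMem τ τ.injective hi
    have hevades : Evades G z (ι v) := by
      refine hf.evades_root hG (by lia) hz (h.two_le_dist hι hG) ?_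
      exact .of_embedding hi (gap_le i (by lia))
        (fun a ↦ gap_le _ ((h.depth_le i hi a).trans (by lia))) (by lia)
    obtain ⟨s', hs', h'⟩ := hevades.exists_response hmove
    exact ⟨s', hs', .inr h'⟩

theorem exists_evades {j : ℕ} (hι : IsPendantExtension ι root) (hG : G.Connected)
    (hdiam : ∀ w w', G.dist (ι w) (ι w') ≤ 2) (hcop : ¬ CopsWinWith H q) (hq : q ≤ j)
    (hfree : ∀ (z : Fin j → V) w, ∃ f : armGraph n ↪g G, IsArm (ι w) f ∧ ∀ t, z t ∉ Set.range f)
    (hn : 4 * (j - q) ≤ n) (z : Fin j → V) : ∃ s, Evades G z s := by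
  obtain ⟨τ, hτ⟩ := exists_embedding_le hq fun i ↦ depth ι root (z i)
  obtain ⟨v, hv⟩ := exists_robberSafe hcop fun a ↦ root (z (τ a))
  by_cases hdeep : ∀ i ∉ Set.range τ, 2 ≤ depth ι root (z i)
  · exact ⟨ι v, Shadowing.evades ⟨hv, hdeep, hτ⟩ hι hG hdiam hfree (by simpa using hn)⟩
  · push Not at hdeep
    obtain ⟨i, hi, hlt⟩ := hdeep
    obtain ⟨f, hf, hz⟩ := hfree z v
    have hcard : q < j := by
      simpa using Fintype.card_lt_of_injective_of_notMem τ τ.injective hi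
    have hn_pos : 0 < n := by lia
    have gap_le (t : Fin j) (ht : depth ι root (z t) ≤ 1) :
        G.dist (z t) (f (.outer ⟨0, hn_pos⟩ 0)) - 2 ≤ 3 := by
      have := dist_base_le_depth_add_two (root := root) hG hdiam (z t) v
      have := hf.dist_root_entry_le hG hn_pos
      have := hG.dist_triangle (u := z t) (v := ι v) (w := f (.outer ⟨0, hn_pos⟩ 0))
      lia
    refine ⟨_, hf.evades_entry hG hn_pos hz ?_⟩
    exact .of_embedding hi (gap_le i (by lia)) (fun a ↦ gap_le _ ((hτ i hi a).trans (by lia)))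
      (by rw [Fintype.card_fin]; lia)

end PendantExtension

/-! ### The graph `Z_{k,m}(H)` -/

section ZGraph

variable {W : Type*} {H : SimpleGraph W} {k m : ℕ}

theorem zGraph_adj_inl {w w' : W} :
    (ZGraph H k m).Adj (.inl w) (.inl w') ↔ H.Adj w w' := by
  simp only [ZGraph, fromRel_adj, zRel, H.adj_comm w' w, or_self, ne_eq, Sum.inl.injEq]
  exact and_iff_right_of_imp Adj.ne

theorem zGraph_adj_arm {v : W} {i : Fin m} {a b : ArmVert (4 * (m - k))} :
    (ZGraph H k m).Adj (.inr (.inr (v, i, a))) (.inr (.inr (v, i, b))) ↔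
      (armGraph (4 * (m - k))).Adj a b := by
  simp only [ZGraph, fromRel_adj, zRel, adj_comm _ b a, true_and, or_self, ne_eq, Sum.inr.injEq,
    Prod.mk.injEq]
  exact and_iff_right_of_imp Adj.ne

theorem zGraph_adj_start (v : W) (i : Fin m) :
    (ZGraph H k m).Adj (.inl v) (.inr (.inr (v, i, .start))) :=
  ⟨Sum.inl_ne_inr, .inl ⟨rfl, rfl⟩⟩

/-- The copy of `H` in `Z_{k,m}(H)`. -/
def zBase (H : SimpleGraph W) (k m : ℕ) : H ↪g ZGraph H k m where
  toFun := .inl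
  inj' := Sum.inl_injective
  map_rel_iff' := zGraph_adj_inl

/-- The `i`-th arm at the vertex `v` in `Z_{k,m}(H)`. -/
def zArm (H : SimpleGraph W) (k : ℕ) (v : W) (i : Fin m) :
    armGraph (4 * (m - k)) ↪g ZGraph H k m where
  toFun a := .inr (.inr (v, i, a))
  inj' a b h := by simpa using h
  map_rel_iff' := zGraph_adj_arm

/-- The vertex of `H` at which the path or the arm containing a given vertex of `Z_{k,m}(H)` is
attached. -/
def zRoot {p : ℕ} : ZVert W m p → W
  | .inl w => w
  | .inr (.inl (w, _)) => w
  | .inr (.inr (w, _, _)) => w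

theorem isPendantExtension_zGraph : IsPendantExtension (zBase H k m) zRoot where
  root_base _ := rfl
  root_eq_of_adj u u' h hu := by
    rw [ZGraph, fromRel_adj] at h
    rcases u with w | ⟨w, l⟩ | ⟨w, i, a⟩
    · exact (hu ⟨w, rfl⟩).elim
    all_goals
      rcases u' with w' | ⟨w', l'⟩ | ⟨w', i', a'⟩ <;> simp only [zRel, zRoot] at h ⊢ <;> tauto

theorem isArm_zArm (v : W) (i : Fin m) : IsArm (zBase H k m v) (zArm H k v i) where
  adj_root := zGraph_adj_start v i
  root_notMem_range := by
    rintro ⟨a, ha⟩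
    cases ha
  mem_range_or_eq_of_adj u a h := by
    change (ZGraph H k m).Adj u (.inr (.inr (v, i, a))) at h
    rw [ZGraph, fromRel_adj] at h
    rcases u with w | ⟨w, l⟩ | ⟨w, i', b⟩
    · obtain ⟨rfl, rfl⟩ : w = v ∧ a = .start := by simpa [zRel] using h
      exact .inr ⟨rfl, rfl⟩
    · simp [zRel] at h
    · obtain ⟨rfl, rfl⟩ : w = v ∧ i' = i := by
        simp only [zRel] at h
        tauto
      exact .inl ⟨b, rfl⟩

theorem exists_isArm_notMem_range {j : ℕ} (hj : j < m)
    (z : Fin j → ZVert W m (4 * (m - k))) (v : W) :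
    ∃ f : armGraph (4 * (m - k)) ↪g ZGraph H k m,
      IsArm (zBase H k m v) f ∧ ∀ t, z t ∉ Set.range f := by
  by_contra! h
  choose t ht using fun i : Fin m ↦ h (zArm H k v i) (isArm_zArm v i)
  have ht_inj : Function.Injective t := fun i i' hii' ↦ by
    obtain ⟨a, ha⟩ := ht i
    obtain ⟨a', ha'⟩ := ht i'
    rw [hii', ← ha'] at ha
    cases ha
    rfl
  have := Fintype.card_le_of_injective t ht_inj
  simp only [Fintype.card_fin] at this
  lia

theorem zGraph_reachable_base (u : ZVert W m (4 * (m - k))) :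
    (ZGraph H k m).Reachable (zBase H k m (zRoot u)) u := by
  rcases u with w | ⟨w, l, hl⟩ | ⟨w, i, a⟩
  · rfl
  · induction l with
    | zero => exact Adj.reachable ⟨Sum.inl_ne_inr, .inl ⟨rfl, rfl⟩⟩
    | succ l ih => exact (ih (by lia)).trans (Adj.reachable ⟨by simp, .inl ⟨rfl, rfl⟩⟩)
  · exact (zGraph_adj_start w i).reachable.trans
      ((armGraph_reachable a).map (zArm H k w i).toHom)

theorem zGraph_connected (hH : H.Connected) : (ZGraph H k m).Connected where
  preconnected u w := (zGraph_reachable_base u).symm.trans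
    (((hH.preconnected (zRoot u) (zRoot w)).map (zBase H k m).toHom).trans
      (zGraph_reachable_base w))
  nonempty := hH.nonempty.map (zBase H k m)

end ZGraph

theorem ZGraph_zombie_number_ge_general {W : Type*} (H : SimpleGraph W) (hH : H.Connected)
    (k m : ℕ) (hk : 1 ≤ k) (hcop : ∀ q < k, ¬ CopsWinWith H q)
    (hdiam : ∀ w w' : W, H.dist w w' ≤ 2) {j : ℕ} (hj : j < m) :
    ¬ ZombiesWinWith (ZGraph H k m) j := by
  rintro ⟨z, hz⟩
  have hG := zGraph_connected (k := k) (m := m) hH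
  obtain ⟨s, hs⟩ := exists_evades (q := min j (k - 1)) isPendantExtension_zGraph hG
    (fun w w' ↦ (dist_map_le hH (zBase H k m).toHom w w').trans (hdiam w w'))
    (hcop _ (by lia)) (min_le_left ..) (exists_isArm_notMem_range hj) (by lia) z
  exact hs.not_zombiesCatchFrom (hz s)

/-- Let `m ≥ k ≥ 1` and let `H` be a finite connected graph with cop number at least `k`
and diameter at most 2.  Then `m - 1` zombies do not have a winning strategy on
`Z_{k,m}(H)`; that is, `z(Z_{k,m}(H)) ≥ m`. -/
theorem ZGraph_zombie_number_ge {W : Type*} [Fintype W] (H : SimpleGraph W)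
    (hH : H.Connected) (k m : ℕ) (hk : 1 ≤ k) (hkm : k ≤ m)
    (hcop : k ≤ copNumber H) (hdiam : ∀ w w' : W, H.dist w w' ≤ 2) :
    ¬ ZombiesWinWith (ZGraph H k m) (m - 1) ∧ m ≤ zombieNumber (ZGraph H k m) := by
  have not_win (j : ℕ) (hj : j < m) : ¬ ZombiesWinWith (ZGraph H k m) j :=
    ZGraph_zombie_number_ge_general H hH k m hk
      (fun q hq ↦ Nat.notMem_of_lt_sInf (hq.trans_le hcop)) hdiam hj
  exact ⟨not_win (m - 1) (by lia), le_zombieNumber not_win⟩
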